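/- Let G be a digraph on N and (γ,H,c) utility parameters such that G is an equilibrium network for non-consensual agents with parameters (γ,H,c). Then G is a sequential hierarchy all of whose strongly connected components are complete connected components, and moreover: (A) for every i ∈ N with ℓ := ℓ_i(C(G)) ≥ 1, H(ℓ) − H(ℓ−1) > γ + c·(|P_i(G)| + L_ℓ(G)) / (|P_i(G)|·(|P_i(G)| + 1)); and (B) for every critical edge ij, ji ∈ G with ℓ := ℓ_i(C(G)), H(ℓ+1) − H(ℓ) < γ + c·(1 + L_ℓ(G)/2). -/

import Mathlib

/-!
The proof rests on comparing `u_i` before and after a single move of agent `i`.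

*Shape of `G`.* Adding an edge `ij` gains `γ` and never raises the subordination cost, because
`N_in^s(i)` can only shrink and the sets `P_i(·,k)` can only grow. It lowers the level of `i` only
if it merges the component of `i` with a component strictly above it. Hence at equilibrium a
missing edge `ij` forces `j` to lie strictly above `i` (`edge_or_strict`). It follows that for
`i ≠ j` reachability is the same as being joined by an edge (`edge_of_reach`), so the network is a
total preorder: components are complete, they are linearly ordered, and every node points to all
nodes of higher level.

*Condition (A).* If `i` has level `ℓ ≥ 1`, adding an edge from `i` to a node `j` of level `ℓ - 1`
puts `i` at level at least `ℓ - 1`, turns `j` into a peer and enlarges all the remaining `P_i(·,k)`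
from the component of `i` to that component together with `j`. Equilibrium says that this does not
pay, which is (A).

*Condition (B).* A critical edge `ij` in a complete component means that this component is
`{i, j}`. Deleting `ij` puts `i` strictly below `j`, hence at level at least `ℓ + 1`, at the price
of one more superior and of all the sets `P_i(·,k)` becoming `{i}`. Equilibrium says that this does
not pay, which is (B).

Since `H` is increasing, only lower bounds on the level after a move are needed; these all come
from `level_le_level`, which compares the levels of two networks having the same reachability
relation on a set closed under predecessors.
-/

open Finset MeasureTheory ProbabilityTheory

attribute [local instance 10] Classical.propDecidable

noncomputable section

/-- A digraph on the agent set `Fin n`: a finite set of ordered pairs (directed edges). -/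
abbrev Network (n : ℕ) := Finset (Fin n × Fin n)

variable {n : ℕ}

/-- Edges only join distinct nodes. -/
def validNetwork (G : Network n) : Prop := ∀ p ∈ G, p.1 ≠ p.2

/-- Out-neighborhood `N_out(i,G)`. -/
def Nout (G : Network n) (i : Fin n) : Finset (Fin n) := univ.filter fun j => (i, j) ∈ G

/-- The set of subordinates `N_in^s(i,G)`. -/
def NinS (G : Network n) (i : Fin n) : Finset (Fin n) :=
  univ.filter fun j => (j, i) ∈ G ∧ (i, j) ∉ G

/-- `P_i(G,k) = {i} ∪ {j : kj ∈ G and ij, ji ∈ G}`. -/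
def Pset (G : Network n) (i k : Fin n) : Finset (Fin n) :=
  insert i (univ.filter fun j => (k, j) ∈ G ∧ (i, j) ∈ G ∧ (j, i) ∈ G)

/-- `P_i(G) = ⋂_{k ∈ N_in^s(i,G)} P_i(G,k)`. -/
def Pall (G : Network n) (i : Fin n) : Finset (Fin n) :=
  univ.filter fun j => ∀ k ∈ NinS G i, j ∈ Pset G i k

/-- Reachability along directed edges. -/
def reach (G : Network n) : Fin n → Fin n → Prop :=
  Relation.ReflTransGen fun a b => (a, b) ∈ G

/-- `i` and `j` belong to the same strongly connected component. -/
def sameSCC (G : Network n) (i j : Fin n) : Prop := reach G i j ∧ reach G j i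

/-- The strongly connected component `Γ(i,G)` of `i`. -/
def sccSet (G : Network n) (i : Fin n) : Finset (Fin n) := univ.filter fun j => sameSCC G i j

/-- An arc of the condensation `C(G)`, between the SCC of `a` and the SCC of `b`. -/
def condArc (G : Network n) (a b : Fin n) : Prop :=
  ¬ sameSCC G a b ∧ ∃ a' b' : Fin n, sameSCC G a a' ∧ sameSCC G b b' ∧ (a', b') ∈ G

/-- The SCC of `a` is a source of the condensation `C(G)`. -/
def isSourceSCC (G : Network n) (a : Fin n) : Prop := ∀ b, ¬ condArc G b a

/-- The level `ℓ_i(C(G))`: the largest number of arcs on a directed path in the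
condensation `C(G)` from a source of `C(G)` to the SCC of `i`. -/
def level (G : Network n) (i : Fin n) : ℕ :=
  sSup {m : ℕ | ∃ f : ℕ → Fin n, isSourceSCC G (f 0) ∧ sameSCC G (f m) i ∧
    ∀ t, t < m → condArc G (f t) (f (t + 1))}

/-- The utility `u_i(G)` of agent `i` in the network `G`. -/
def utility (γ c : ℝ) (H : ℕ → ℝ) (G : Network n) (i : Fin n) : ℝ :=
  ((Nout G i).card : ℝ) * γ + H (level G i)
    - c * ∑ k ∈ NinS G i, (1 : ℝ) / ((Pset G i k).card : ℝ)

/-- Utility parameters: `γ > 0`, `c > 0`, `H` strictly increasing with `H 0 ≥ 0`. -/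
def UtilityParams (γ c : ℝ) (H : ℕ → ℝ) : Prop :=
  0 < γ ∧ 0 < c ∧ StrictMono H ∧ 0 ≤ H 0

/-- Equilibrium network for non-consensual agents. -/
def eqNonConsensual (γ c : ℝ) (H : ℕ → ℝ) (G : Network n) : Prop :=
  ∀ i j : Fin n, i ≠ j →
    ((i, j) ∈ G → utility γ c H (G.erase (i, j)) i < utility γ c H G i) ∧
    ((i, j) ∉ G → utility γ c H (insert (i, j) G) i < utility γ c H G i)

/-- Equilibrium network for consensual agents. -/
def eqConsensual (γ c : ℝ) (H : ℕ → ℝ) (G : Network n) : Prop :=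
  ∀ i j : Fin n, i ≠ j →
    ((i, j) ∈ G → utility γ c H (G.erase (i, j)) i < utility γ c H G i) ∧
    ((i, j) ∉ G →
      utility γ c H (insert (i, j) G) i < utility γ c H G i ∨
        (utility γ c H G i ≤ utility γ c H (insert (i, j) G) i ∧
          utility γ c H (insert (i, j) G) j < utility γ c H G j))

/-- `G` has no directed cycles: every edge joining two nodes of the same SCC
is an undirected edge. -/
def noDirectedCycles (G : Network n) : Prop :=
  ∀ i j : Fin n, (i, j) ∈ G → sameSCC G i j → (j, i) ∈ G

/-- Reachability forgetting edge directions. -/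
def weakReach (G : Network n) : Fin n → Fin n → Prop :=
  Relation.ReflTransGen fun a b => (a, b) ∈ G ∨ (b, a) ∈ G

/-- `G` is weakly connected. -/
def weaklyConnected (G : Network n) : Prop := ∀ i j : Fin n, weakReach G i j

/-- Every SCC of `G` is a complete connected component: any two distinct nodes of
the same SCC are joined by an undirected edge. -/
def completeSCCs (G : Network n) : Prop :=
  ∀ i j : Fin n, i ≠ j → sameSCC G i j → (i, j) ∈ G ∧ (j, i) ∈ G

/-- The undirected edge `ij, ji ∈ G` is critical: `Γ(i,G) ≠ Γ(i, G - ij)`. -/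
def criticalEdge (G : Network n) (i j : Fin n) : Prop :=
  (i, j) ∈ G ∧ (j, i) ∈ G ∧
    {k : Fin n | sameSCC G i k} ≠ {k : Fin n | sameSCC (G.erase (i, j)) i k}

/-- `L_ℓ(G) = |{j : ℓ_j(C(G)) < ℓ}|`. -/
def Lcard (G : Network n) (ℓ : ℕ) : ℕ :=
  (univ.filter fun j : Fin n => level G j < ℓ).card

/-- `G` is a sequential hierarchy: weakly connected, no directed cycles, exactly one
SCC per level, and (if more than one level) every node has a single edge towards
every node of strictly higher level. -/
def seqHierarchy (G : Network n) : Prop :=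
  weaklyConnected G ∧ noDirectedCycles G ∧
  (∀ i j : Fin n, level G i = level G j → sameSCC G i j) ∧
  ((∃ i j : Fin n, level G i ≠ level G j) →
    ∀ i j : Fin n, level G i < level G j → (i, j) ∈ G ∧ (j, i) ∉ G)

/-- The better-response update of `G` at the ordered pair `p = (i,j)`. -/
def brUpdate (consensual : Bool) (γ c : ℝ) (H : ℕ → ℝ) (G : Network n)
    (p : Fin n × Fin n) : Network n :=
  if p ∈ G then
    if utility γ c H G p.1 ≤ utility γ c H (G.erase p) p.1 then G.erase p else G
  else if consensual then
    if utility γ c H G p.1 ≤ utility γ c H (insert p G) p.1 ∧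
        utility γ c H G p.2 ≤ utility γ c H (insert p G) p.2 then insert p G else G
  else
    if utility γ c H G p.1 ≤ utility γ c H (insert p G) p.1 then insert p G else G

/-- Equilibrium network for the given agent type. -/
def equilibrium (consensual : Bool) (γ c : ℝ) (H : ℕ → ℝ) (G : Network n) : Prop :=
  if consensual then eqConsensual γ c H G else eqNonConsensual γ c H G

/-! ### Reachability -/

lemma reach_trans {G : Network n} {a b d : Fin n} (h : reach G a b) (h' : reach G b d) :
    reach G a d := Relation.ReflTransGen.trans h h'

lemma reach_single {G : Network n} {a b : Fin n} (h : (a, b) ∈ G) : reach G a b :=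
  Relation.ReflTransGen.single h

lemma reach_refl (G : Network n) (a : Fin n) : reach G a a := Relation.ReflTransGen.refl

lemma reach_mono {G G' : Network n} (h : G ⊆ G') {a b : Fin n} (hr : reach G a b) :
    reach G' a b := Relation.ReflTransGen.mono (fun _ _ hab => h hab) _ _ hr

lemma sameSCC.symm' {G : Network n} {a b : Fin n} (h : sameSCC G a b) : sameSCC G b a :=
  ⟨h.2, h.1⟩

/-- A path in `G + ij` either avoids `ij`, or starts with a path to `i` and ends with a path
from `j`, both in `G`. -/
lemma reach_insert {G : Network n} {i j x y : Fin n} (h : reach (insert (i, j) G) x y) :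
    reach G x y ∨ (reach G x i ∧ reach G j y) := by
  induction h using Relation.ReflTransGen.head_induction_on with
  | refl => exact Or.inl (reach_refl G y)
  | head hac _ ih =>
    rcases Finset.mem_insert.1 hac with he | he
    · obtain ⟨rfl, rfl⟩ := Prod.mk.injEq _ _ _ _ ▸ he
      rcases ih with ih | ih
      · exact Or.inr ⟨reach_refl G _, ih⟩
      · exact Or.inr ⟨reach_refl G _, ih.2⟩
    · rcases ih with ih | ih
      · exact Or.inl (reach_trans (reach_single he) ih)
      · exact Or.inr ⟨reach_trans (reach_single he) ih.1, ih.2⟩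

lemma condArc.toReach {G : Network n} {a b : Fin n} (h : condArc G a b) : reach G a b := by
  obtain ⟨_, a', b', ha, hb, he⟩ := h
  exact reach_trans ha.1 (reach_trans (reach_single he) hb.2)

lemma condArc.not_reach {G : Network n} {a b : Fin n} (h : condArc G a b) : ¬ reach G b a :=
  fun hr => h.1 ⟨h.toReach, hr⟩

lemma condArc_congr_left {G : Network n} {a a₁ b : Fin n} (hs : sameSCC G a₁ a)
    (h : condArc G a b) : condArc G a₁ b := by
  obtain ⟨hn, a', b', ha, hb, he⟩ := h
  refine ⟨fun h' => hn ⟨reach_trans hs.2 h'.1, reach_trans h'.2 hs.1⟩, a', b', ?_, hb, he⟩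
  exact ⟨reach_trans hs.1 ha.1, reach_trans ha.2 hs.2⟩

/-! ### Levels -/

/-- The set of lengths of condensation paths from a source to the component of `i`, whose
supremum is `level G i`. -/
def pathLengths (G : Network n) (i : Fin n) : Set ℕ :=
  {m : ℕ | ∃ f : ℕ → Fin n, isSourceSCC G (f 0) ∧ sameSCC G (f m) i ∧
    ∀ t, t < m → condArc G (f t) (f (t + 1))}

lemma level_eq (G : Network n) (i : Fin n) : level G i = sSup (pathLengths G i) := rfl

/-- The number of nodes from which `a` can be reached. It increases strictly along arcs of the
condensation, and so bounds levels and supports inductions. -/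
def ancestors (G : Network n) (a : Fin n) : ℕ := (univ.filter fun x => reach G x a).card

lemma ancestors_lt {G : Network n} {a b : Fin n} (h : condArc G a b) :
    ancestors G a < ancestors G b := by
  refine Finset.card_lt_card ⟨fun x hx => ?_, fun hsub => ?_⟩
  · simp only [Finset.mem_filter, Finset.mem_univ, true_and] at hx ⊢
    exact reach_trans hx h.toReach
  · have hb : b ∈ univ.filter fun x => reach G x b := by simp [reach_refl]
    have := hsub hb
    simp only [Finset.mem_filter, Finset.mem_univ, true_and] at this
    exact h.not_reach this

lemma pathLengths_bddAbove (G : Network n) (i : Fin n) : BddAbove (pathLengths G i) := by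
  refine ⟨n, ?_⟩
  rintro m ⟨f, -, -, hf⟩
  have key : ∀ t, t ≤ m → t ≤ ancestors G (f t) := by
    intro t
    induction t with
    | zero => intro _; exact Nat.zero_le _
    | succ t ih =>
      intro ht
      have h1 := ih (by omega)
      have h2 := ancestors_lt (hf t (by omega))
      omega
  refine (key m le_rfl).trans ?_
  exact (Finset.card_le_univ _).trans (by simp)

/-- A path to the component of `a` followed by an arc to the component of `b`. -/
lemma succ_mem_pathLengths {G : Network n} {a b : Fin n} (h : condArc G a b) {m : ℕ}
    (hm : m ∈ pathLengths G a) : m + 1 ∈ pathLengths G b := by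
  obtain ⟨f, h0, hma, hf⟩ := hm
  refine ⟨fun t => if t ≤ m then f t else b, by simpa using h0, ?_, ?_⟩
  · simp only [if_neg (Nat.not_succ_le_self m)]
    exact ⟨reach_refl G b, reach_refl G b⟩
  · intro t ht
    rcases Nat.lt_or_ge t m with htm | htm
    · have h1 : t ≤ m := by omega
      have h2 : t + 1 ≤ m := by omega
      simpa [h1, h2] using hf t htm
    · obtain rfl : t = m := by omega
      simpa using condArc_congr_left hma h

lemma pathLengths_nonempty (G : Network n) (i : Fin n) : (pathLengths G i).Nonempty := by
  induction h : ancestors G i using Nat.strong_induction_on generalizing i with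
  | _ N ih =>
    by_cases hs : isSourceSCC G i
    · exact ⟨0, fun _ => i, hs, ⟨reach_refl G i, reach_refl G i⟩, fun t ht => by omega⟩
    · simp only [isSourceSCC, not_forall, not_not] at hs
      obtain ⟨b, hb⟩ := hs
      obtain ⟨m, hm⟩ := ih _ (h ▸ ancestors_lt hb) b rfl
      exact ⟨m + 1, succ_mem_pathLengths hb hm⟩

lemma level_mem (G : Network n) (i : Fin n) : level G i ∈ pathLengths G i :=
  Nat.sSup_mem (pathLengths_nonempty G i) (pathLengths_bddAbove G i)

lemma le_level {G : Network n} {i : Fin n} {m : ℕ} (h : m ∈ pathLengths G i) : m ≤ level G i :=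
  le_csSup (pathLengths_bddAbove G i) h

lemma level_lt_of_condArc {G : Network n} {a b : Fin n} (h : condArc G a b) :
    level G a < level G b := le_level (succ_mem_pathLengths h (level_mem G a))

lemma level_eq_of_sameSCC {G : Network n} {a b : Fin n} (h : sameSCC G a b) :
    level G a = level G b := by
  have : ∀ {x y : Fin n}, sameSCC G x y → level G x ≤ level G y := by
    intro x y hxy
    obtain ⟨f, h0, hm, hf⟩ := level_mem G x
    exact le_level ⟨f, h0, ⟨reach_trans hm.1 hxy.1, reach_trans hxy.2 hm.2⟩, hf⟩
  exact le_antisymm (this h) (this h.symm')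

lemma level_le_of_edge {G : Network n} {a b : Fin n} (h : (a, b) ∈ G) :
    level G a ≤ level G b := by
  by_cases hs : sameSCC G a b
  · exact (level_eq_of_sameSCC hs).le
  · exact (level_lt_of_condArc ⟨hs, a, b, ⟨reach_refl G a, reach_refl G a⟩,
      ⟨reach_refl G b, reach_refl G b⟩, h⟩).le

lemma level_le_of_reach {G : Network n} {a b : Fin n} (h : reach G a b) :
    level G a ≤ level G b := by
  induction h with
  | refl => exact le_rfl
  | tail _ hbc ih => exact ih.trans (level_le_of_edge hbc)

lemma level_lt_of_strict {G : Network n} {a b : Fin n} (h : reach G a b) (h' : ¬ reach G b a) :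
    level G a < level G b := by
  have key : reach G b a ∨ level G a < level G b := by
    clear h'
    induction h using Relation.ReflTransGen.head_induction_on with
    | refl => exact Or.inl (reach_refl G b)
    | @head a d had hdb ih =>
      by_cases hs : sameSCC G a d
      · rcases ih with ih | ih
        · exact Or.inl (reach_trans ih hs.2)
        · exact Or.inr (level_eq_of_sameSCC hs ▸ ih)
      · refine Or.inr (lt_of_lt_of_le ?_ (level_le_of_reach hdb))
        exact level_lt_of_condArc ⟨hs, a, d, ⟨reach_refl G a, reach_refl G a⟩,
          ⟨reach_refl G d, reach_refl G d⟩, had⟩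
  exact key.resolve_left h'

/-- The last arc of a longest path: a node of positive level has an in-arc from the previous
level. -/
lemma exists_prev {G : Network n} {i : Fin n} (h : 1 ≤ level G i) :
    ∃ j, condArc G j i ∧ level G j + 1 = level G i := by
  obtain ⟨f, h0, hm, hf⟩ := level_mem G i
  obtain ⟨m, hml⟩ : ∃ m, level G i = m + 1 := ⟨level G i - 1, by omega⟩
  rw [hml] at hm hf
  have hlast := hf m (by omega)
  have harc : condArc G (f m) i := by
    obtain ⟨hns, a', b', ha, hb, he⟩ := hlast
    exact ⟨fun h' => hns ⟨reach_trans h'.1 hm.2, reach_trans hm.1 h'.2⟩, a', b', ha,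
      ⟨reach_trans hm.2 hb.1, reach_trans hb.2 hm.1⟩, he⟩
  refine ⟨f m, harc, ?_⟩
  have h1 : m ≤ level G (f m) :=
    le_level ⟨f, h0, ⟨reach_refl G _, reach_refl G _⟩, fun t ht => hf t (by omega)⟩
  have h2 := level_lt_of_condArc harc
  omega

/-- If `G` and `G'` have the same reachability relation on a set `S` that is closed under
predecessors in `G`, then levels on `S` are at least as high in `G'` as in `G`. -/
lemma level_le_level {G G' : Network n} (S : Fin n → Prop)
    (hS : ∀ x y, reach G x y → S y → S x)
    (h1 : ∀ x y, reach G x y → S y → reach G' x y)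
    (h2 : ∀ x y, S x → S y → reach G' x y → reach G x y)
    {y : Fin n} (hy : S y) : level G y ≤ level G' y := by
  induction h : level G y generalizing y with
  | zero => exact Nat.zero_le _
  | succ m ih =>
    obtain ⟨x, hxy, hlx⟩ := exists_prev (G := G) (i := y) (by omega)
    have hx : S x := hS x y hxy.toReach hy
    have h3 := ih hx (by omega)
    have h4 : level G' x < level G' y :=
      level_lt_of_strict (h1 x y hxy.toReach hy) (fun hr => hxy.not_reach (h2 y x hy hx hr))
    omega

/-- Adding an edge `ij` does not lower the level of `i` unless `j` lies strictly above `i`. -/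
lemma level_le_insert {G : Network n} {i j : Fin n} (h : reach G j i → reach G i j) :
    level G i ≤ level (insert (i, j) G) i := by
  refine level_le_level (fun x => reach G x i) (fun x y hxy hy => reach_trans hxy hy)
    (fun x y hxy _ => reach_mono (Finset.subset_insert _ _) hxy) ?_ (reach_refl G i)
  intro x y _ hy hxy
  rcases reach_insert hxy with hr | ⟨hxi, hjy⟩
  · exact hr
  · exact reach_trans hxi (reach_trans (h (reach_trans hjy hy)) hjy)

/-- Adding an edge `ij` to a node `j` above `i` leaves `i` at a level no lower than that of `j`. -/
lemma level_le_insert_above {G : Network n} {i j : Fin n} (h : reach G j i) :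
    level G j ≤ level (insert (i, j) G) i := by
  refine le_trans (b := level (insert (i, j) G) j) ?_
    (level_le_of_reach (reach_mono (Finset.subset_insert _ _) h))
  refine level_le_level (fun x => reach G x j) (fun x y hxy hy => reach_trans hxy hy)
    (fun x y hxy _ => reach_mono (Finset.subset_insert _ _) hxy) ?_ (reach_refl G j)
  intro x y hx _ hxy
  rcases reach_insert hxy with hr | ⟨_, hjy⟩
  · exact hr
  · exact reach_trans hx hjy

/-! ### The shape of equilibrium networks -/

lemma card_Nout_insert {G : Network n} {i j : Fin n} (h : (i, j) ∉ G) :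
    (Nout (insert (i, j) G) i).card = (Nout G i).card + 1 := by
  have : Nout (insert (i, j) G) i = insert j (Nout G i) := by
    ext k
    simp [Nout]
  rw [this, Finset.card_insert_of_notMem (by simpa [Nout] using h)]

lemma card_Nout_erase {G : Network n} {i j : Fin n} (h : (i, j) ∈ G) :
    (Nout G i).card = (Nout (G.erase (i, j)) i).card + 1 := by
  have := card_Nout_insert (G := G.erase (i, j)) (i := i) (j := j) (by simp)
  rwa [Finset.insert_erase h] at this

lemma cost_insert_le (G : Network n) (i j : Fin n) :
    ∑ k ∈ NinS (insert (i, j) G) i, (1 : ℝ) / ((Pset (insert (i, j) G) i k).card : ℝ)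
      ≤ ∑ k ∈ NinS G i, (1 : ℝ) / ((Pset G i k).card : ℝ) := by
  have hsub : NinS (insert (i, j) G) i ⊆ NinS G i := by
    intro k hk
    simp only [NinS, Finset.mem_filter, Finset.mem_univ, true_and, Finset.mem_insert,
      Prod.mk.injEq, not_or] at hk ⊢
    grind
  refine le_trans (Finset.sum_le_sum (fun k _ => ?_))
    (Finset.sum_le_sum_of_subset_of_nonneg hsub (fun k _ _ => by positivity))
  have hpos : 0 < (Pset G i k).card := Finset.card_pos.2 ⟨i, Finset.mem_insert_self _ _⟩
  refine one_div_le_one_div_of_le (by exact_mod_cast hpos) ?_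
  norm_cast
  refine Finset.card_le_card (fun m hm => ?_)
  simp only [Pset, Finset.mem_insert, Finset.mem_filter, Finset.mem_univ, true_and] at hm ⊢
  tauto

/-- At equilibrium, a missing edge `ij` can only be explained by `j` lying strictly above `i`. -/
lemma edge_or_strict {G : Network n} {γ c : ℝ} {H : ℕ → ℝ} (hpar : UtilityParams γ c H)
    (heq : eqNonConsensual γ c H G) {i j : Fin n} (hij : i ≠ j) (h : (i, j) ∉ G) :
    reach G j i ∧ ¬ reach G i j := by
  by_contra hcon
  obtain ⟨hγ, hc, hH, -⟩ := hpar
  have hu := (heq i j hij).2 h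
  have h1 := hH.monotone (level_le_insert (G := G) (i := i) (j := j) (by tauto))
  have h2 := mul_le_mul_of_nonneg_left (cost_insert_le G i j) hc.le
  simp only [utility, card_Nout_insert h] at hu
  push_cast at hu
  linarith

/-- At equilibrium the edge relation is transitive off the diagonal. -/
lemma edge_of_reach {G : Network n} {γ c : ℝ} {H : ℕ → ℝ} (hpar : UtilityParams γ c H)
    (heq : eqNonConsensual γ c H G) {i j : Fin n} (hij : i ≠ j) (h : reach G i j) :
    (i, j) ∈ G := by
  by_contra hcon
  exact (edge_or_strict hpar heq hij hcon).2 h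

/-- At equilibrium any two nodes are comparable for reachability. -/
lemma reach_total {G : Network n} {γ c : ℝ} {H : ℕ → ℝ} (hpar : UtilityParams γ c H)
    (heq : eqNonConsensual γ c H G) (i j : Fin n) : reach G i j ∨ reach G j i := by
  by_cases hij : i = j
  · exact Or.inl (hij ▸ reach_refl G i)
  · by_cases h : (i, j) ∈ G
    · exact Or.inl (reach_single h)
    · exact Or.inr (edge_or_strict hpar heq hij h).1

lemma level_lt_iff {G : Network n} {γ c : ℝ} {H : ℕ → ℝ} (hpar : UtilityParams γ c H)
    (heq : eqNonConsensual γ c H G) (i j : Fin n) :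
    level G i < level G j ↔ reach G i j ∧ ¬ reach G j i := by
  refine ⟨fun h => ?_, fun h => level_lt_of_strict h.1 h.2⟩
  have hn : ¬ reach G j i := fun hr => absurd (level_le_of_reach hr) (by omega)
  exact ⟨(reach_total hpar heq i j).resolve_right hn, hn⟩

/-- At equilibrium the nodes imposing a cost on `i` are exactly those strictly above it. -/
lemma mem_NinS_iff {G : Network n} {γ c : ℝ} {H : ℕ → ℝ} (hpar : UtilityParams γ c H)
    (hG : validNetwork G) (heq : eqNonConsensual γ c H G) (i k : Fin n) :
    k ∈ NinS G i ↔ reach G k i ∧ ¬ reach G i k := by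
  simp only [NinS, Finset.mem_filter, Finset.mem_univ, true_and]
  constructor
  · rintro ⟨h1, h2⟩
    have hne : k ≠ i := hG _ h1
    exact ⟨reach_single h1, fun hr => h2 (edge_of_reach hpar heq hne.symm hr)⟩
  · rintro ⟨h1, h2⟩
    have hne : k ≠ i := by rintro rfl; exact h2 (reach_refl G _)
    exact ⟨edge_of_reach hpar heq hne h1, fun he => h2 (reach_single he)⟩

lemma card_NinS {G : Network n} {γ c : ℝ} {H : ℕ → ℝ} (hpar : UtilityParams γ c H)
    (hG : validNetwork G) (heq : eqNonConsensual γ c H G) (i : Fin n) :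
    (NinS G i).card = Lcard G (level G i) := by
  unfold Lcard
  congr 1
  ext k
  rw [mem_NinS_iff hpar hG heq, Finset.mem_filter, level_lt_iff hpar heq]
  simp

/-- At equilibrium all superiors of `i` see the same peers of `i`, namely its component. -/
lemma Pset_eq {G : Network n} {γ c : ℝ} {H : ℕ → ℝ} (hpar : UtilityParams γ c H)
    (hG : validNetwork G) (heq : eqNonConsensual γ c H G) {i k : Fin n} (hk : k ∈ NinS G i) :
    Pset G i k = sccSet G i := by
  rw [mem_NinS_iff hpar hG heq] at hk
  ext m
  simp only [Pset, sccSet, Finset.mem_insert, Finset.mem_filter, Finset.mem_univ, true_and]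
  constructor
  · rintro (rfl | ⟨_, h2, h3⟩)
    · exact ⟨reach_refl G _, reach_refl G _⟩
    · exact ⟨reach_single h2, reach_single h3⟩
  · rintro ⟨h1, h2⟩
    by_cases hmi : m = i
    · exact Or.inl hmi
    · have hkm : k ≠ m := by rintro rfl; exact hk.2 h1
      exact Or.inr ⟨edge_of_reach hpar heq hkm (reach_trans hk.1 h1),
        edge_of_reach hpar heq (Ne.symm hmi) h1, edge_of_reach hpar heq hmi h2⟩

lemma cost_eq {G : Network n} {γ c : ℝ} {H : ℕ → ℝ} (hpar : UtilityParams γ c H)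
    (hG : validNetwork G) (heq : eqNonConsensual γ c H G) (i : Fin n) :
    ∑ k ∈ NinS G i, (1 : ℝ) / ((Pset G i k).card : ℝ)
      = (Lcard G (level G i) : ℝ) / ((sccSet G i).card : ℝ) := by
  rw [Finset.sum_congr rfl (fun k hk => by rw [Pset_eq hpar hG heq hk]), Finset.sum_const,
    card_NinS hpar hG heq, nsmul_eq_mul]
  ring

/-! ### Conditions (A) and (B) -/

lemma conditionA {G : Network n} {γ c : ℝ} {H : ℕ → ℝ} (hpar : UtilityParams γ c H)
    (hG : validNetwork G) (heq : eqNonConsensual γ c H G) (i : Fin n) (hi : 1 ≤ level G i) :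
    γ + c * ((((Pall G i).card : ℝ) + (Lcard G (level G i) : ℝ)) /
          (((Pall G i).card : ℝ) * (((Pall G i).card : ℝ) + 1)))
        < H (level G i) - H (level G i - 1) := by
  obtain ⟨j, hji, hlj⟩ := exists_prev hi
  have hjr := hji.toReach
  have hjn := hji.not_reach
  have hne : i ≠ j := by rintro rfl; exact hjn hjr
  have hnot : (i, j) ∉ G := fun h => hjn (reach_single h)
  have hjN : j ∈ NinS G i := (mem_NinS_iff hpar hG heq i j).2 ⟨hjr, hjn⟩
  -- The intersection defining `Pall` is over a nonempty family of equal sets.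
  have hPall : Pall G i = sccSet G i := by
    ext m
    simp only [Pall, Finset.mem_filter, Finset.mem_univ, true_and]
    constructor
    · intro h
      rw [← Pset_eq hpar hG heq hjN]
      exact h j hjN
    · intro h k hk
      rwa [Pset_eq hpar hG heq hk]
  have hN : NinS (insert (i, j) G) i = (NinS G i).erase j := by
    ext k
    simp only [NinS, Finset.mem_filter, Finset.mem_univ, true_and, Finset.mem_insert,
      Prod.mk.injEq, Finset.mem_erase]
    grind
  have hjs : j ∉ sccSet G i := by
    simp only [sccSet, Finset.mem_filter, Finset.mem_univ, true_and]
    exact fun h => hjn h.1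
  have hP : ∀ k ∈ (NinS G i).erase j,
      (Pset (insert (i, j) G) i k).card = (sccSet G i).card + 1 := by
    intro k hk
    obtain ⟨hkj, hkN⟩ := Finset.mem_erase.1 hk
    have hkr := (mem_NinS_iff hpar hG heq i k).1 hkN
    -- Nothing lies strictly between `j` and `i`, so `k` is not strictly below `j`.
    have hkjr : reach G k j := by
      rcases reach_total hpar heq k j with h | h
      · exact h
      · by_contra hcon
        have h1 := level_lt_of_strict h hcon
        have h2 := level_lt_of_strict hkr.1 hkr.2
        omega
    have hkjE : (k, j) ∈ G := edge_of_reach hpar heq hkj hkjr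
    have hjiE : (j, i) ∈ G := edge_of_reach hpar heq hne.symm hjr
    have hki : k ≠ i := by rintro rfl; exact hkr.2 (reach_refl G _)
    rw [← Finset.card_insert_of_notMem hjs, ← Pset_eq hpar hG heq hkN]
    congr 1
    ext m
    simp only [Pset, Finset.mem_filter, Finset.mem_univ, true_and, Finset.mem_insert,
      Prod.mk.injEq]
    grind
  have hcard : (((NinS G i).erase j).card : ℝ) = (Lcard G (level G i) : ℝ) - 1 := by
    have := Finset.card_erase_add_one hjN
    rw [card_NinS hpar hG heq] at this
    rw [← this]
    push_cast
    ring
  have hu := (heq i j hne).2 hnot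
  have hlev : H (level G i - 1) ≤ H (level (insert (i, j) G) i) := by
    refine hpar.2.2.1.monotone ?_
    have := level_le_insert_above hjr
    omega
  have hsum : ∑ k ∈ NinS (insert (i, j) G) i, (1 : ℝ) / ((Pset (insert (i, j) G) i k).card : ℝ)
      = ((Lcard G (level G i) : ℝ) - 1) / (((sccSet G i).card : ℝ) + 1) := by
    rw [hN, Finset.sum_congr rfl (fun k hk => by rw [hP k hk]), Finset.sum_const, nsmul_eq_mul,
      hcard]
    push_cast
    ring
  simp only [utility, hsum, card_Nout_insert hnot, cost_eq hpar hG heq] at hu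
  rw [hPall]
  have hp : 0 < ((sccSet G i).card : ℝ) := by
    have hmem : i ∈ sccSet G i :=
      Finset.mem_filter.2 ⟨Finset.mem_univ i, reach_refl G i, reach_refl G i⟩
    exact_mod_cast Finset.card_pos.2 ⟨i, hmem⟩
  generalize ((sccSet G i).card : ℝ) = p at *
  generalize (Lcard G (level G i) : ℝ) = L at *
  have hid : (p + L) / (p * (p + 1)) = L / p - (L - 1) / (p + 1) := by
    field_simp
    ring
  rw [hid]
  push_cast at hu
  linarith

lemma conditionB {G : Network n} {γ c : ℝ} {H : ℕ → ℝ} (hpar : UtilityParams γ c H)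
    (hG : validNetwork G) (heq : eqNonConsensual γ c H G) (i j : Fin n)
    (hcrit : criticalEdge G i j) :
    H (level G i + 1) - H (level G i) < γ + c * (1 + (Lcard G (level G i) : ℝ) / 2) := by
  obtain ⟨hij, hji, hne'⟩ := hcrit
  have hne : i ≠ j := hG _ hij
  have hmono : G.erase (i, j) ⊆ G := Finset.erase_subset _ _
  -- If `i` still reached `j`, the edge `ij` could be bypassed and no component would change.
  have hnr : ¬ reach (G.erase (i, j)) i j := by
    intro hr
    have hall : ∀ x y, reach G x y → reach (G.erase (i, j)) x y := by
      intro x y hxy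
      rw [← Finset.insert_erase hij] at hxy
      rcases reach_insert hxy with h | ⟨h1, h2⟩
      · exact h
      · exact reach_trans h1 (reach_trans hr h2)
    apply hne'
    ext k
    exact ⟨fun h => ⟨hall _ _ h.1, hall _ _ h.2⟩,
      fun h => ⟨reach_mono hmono h.1, reach_mono hmono h.2⟩⟩
  -- A third node of the component would provide such a bypass.
  have hthird : ∀ k, k ≠ i → k ≠ j → sameSCC G i k → False := by
    intro k hki hkj hs
    have h1 : (i, k) ∈ G := edge_of_reach hpar heq hki.symm hs.1
    have h2 : (k, j) ∈ G := edge_of_reach hpar heq hkj (reach_trans hs.2 (reach_single hij))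
    refine hnr (reach_trans (reach_single (b := k) ?_) (reach_single ?_))
    · simp [h1, hkj]
    · simp [h2, hki]
  have hscc : sccSet G i = {i, j} := by
    ext k
    simp only [sccSet, Finset.mem_filter, Finset.mem_univ, true_and, Finset.mem_insert,
      Finset.mem_singleton]
    constructor
    · intro h
      by_contra hcon
      push Not at hcon
      exact hthird k hcon.1 hcon.2 h
    · rintro (rfl | rfl)
      · exact ⟨reach_refl G _, reach_refl G _⟩
      · exact ⟨reach_single hij, reach_single hji⟩
  have hlij : level G i = level G j :=
    level_eq_of_sameSCC ⟨reach_single hij, reach_single hji⟩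
  have hjE : (j, i) ∈ G.erase (i, j) := by simp [hji, hne.symm]
  have hlevj : level G j ≤ level (G.erase (i, j)) j := by
    rcases Nat.eq_zero_or_pos (level G j) with h0 | hpos
    · omega
    · obtain ⟨x, hxj, hlx⟩ := exists_prev hpos
      have hxr := hxj.toReach
      have hxn := hxj.not_reach
      have h1 : level G x ≤ level (G.erase (i, j)) x := by
        refine level_le_level (fun y => reach G y x) (fun a b hab hb => reach_trans hab hb) ?_
          (fun a b _ _ hab => reach_mono hmono hab) (reach_refl G x)
        intro a b hab hb
        by_cases hab' : a = b
        · exact hab' ▸ reach_refl _ a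
        · have hbj : b ≠ j := by rintro rfl; exact hxn hb
          exact reach_single (by simp [edge_of_reach hpar heq hab' hab, hbj])
      have hxj' : x ≠ j := by rintro rfl; exact hxn hxr
      have hxi : x ≠ i := by rintro rfl; exact hxn (reach_single hji)
      have hxE : (x, j) ∈ G.erase (i, j) := by simp [edge_of_reach hpar heq hxj' hxr, hxi]
      have h2 := level_lt_of_strict (reach_single hxE) (fun hr => hxn (reach_mono hmono hr))
      omega
  have hlevi := level_lt_of_strict (reach_single hjE) hnr
  have hH : H (level G i + 1) ≤ H (level (G.erase (i, j)) i) :=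
    hpar.2.2.1.monotone (by omega)
  have hN : NinS (G.erase (i, j)) i = insert j (NinS G i) := by
    ext k
    simp only [NinS, Finset.mem_filter, Finset.mem_univ, true_and, Finset.mem_insert,
      Finset.mem_erase, ne_eq, Prod.mk.injEq]
    grind
  have hjN : j ∉ NinS G i := by simp [NinS, hij]
  have hP : ∀ k, Pset (G.erase (i, j)) i k = {i} := by
    intro k
    ext m
    simp only [Pset, Finset.mem_filter, Finset.mem_univ, true_and, Finset.mem_insert,
      Finset.mem_erase, Finset.mem_singleton, ne_eq, Prod.mk.injEq, or_iff_left_iff_imp]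
    rintro ⟨-, ⟨h1, h2⟩, -, h3⟩
    by_contra hmi
    exact hthird m hmi (fun h => h1 (by simpa using h)) ⟨reach_single h2, reach_single h3⟩
  have hsum : ∑ k ∈ NinS (G.erase (i, j)) i, (1 : ℝ) / ((Pset (G.erase (i, j)) i k).card : ℝ)
      = (Lcard G (level G i) : ℝ) + 1 := by
    simp only [hP, hN, Finset.card_singleton, Finset.sum_const, nsmul_eq_mul,
      Finset.card_insert_of_notMem hjN, card_NinS hpar hG heq]
    push_cast
    ring
  have hu := (heq i j hne).1 hij
  simp only [utility, hsum, card_Nout_erase hij, cost_eq hpar hG heq, hscc,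
    Finset.card_pair hne] at hu
  push_cast at hu
  linarith

/-- a non-consensual equilibrium network is a sequential hierarchy with
complete SCCs satisfying conditions (A) and (B). -/
theorem stmt3 {n : ℕ} (hn : 3 ≤ n) (G : Network n) (hG : validNetwork G)
    (γ c : ℝ) (H : ℕ → ℝ) (hpar : UtilityParams γ c H)
    (heq : eqNonConsensual γ c H G) :
    seqHierarchy G ∧ completeSCCs G ∧
    (∀ i : Fin n, 1 ≤ level G i →
      γ + c * ((((Pall G i).card : ℝ) + (Lcard G (level G i) : ℝ)) /
          (((Pall G i).card : ℝ) * (((Pall G i).card : ℝ) + 1)))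
        < H (level G i) - H (level G i - 1)) ∧
    (∀ i j : Fin n, criticalEdge G i j →
      H (level G i + 1) - H (level G i)
        < γ + c * (1 + (Lcard G (level G i) : ℝ) / 2)) := by
  refine ⟨⟨?_, ?_, ?_, ?_⟩, ?_, conditionA hpar hG heq, conditionB hpar hG heq⟩
  · intro i j
    rcases reach_total hpar heq i j with h | h
    · exact Relation.ReflTransGen.mono (fun _ _ he => Or.inl he) _ _ h
    · have h' : weakReach G j i := Relation.ReflTransGen.mono (fun _ _ he => Or.inl he) _ _ h
      have : Std.Symm (fun a b : Fin n => (a, b) ∈ G ∨ (b, a) ∈ G) := ⟨fun _ _ he => he.symm⟩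
      exact Relation.ReflTransGen.stdSymm.symm _ _ h'
  · intro i j hij hs
    exact edge_of_reach hpar heq (hG _ hij).symm hs.2
  · intro i j hl
    have h1 := level_lt_iff hpar heq i j
    have h2 := level_lt_iff hpar heq j i
    rcases reach_total hpar heq i j with h | h
    · exact ⟨h, by by_contra hn; exact absurd (h1.2 ⟨h, hn⟩) (by omega)⟩
    · exact ⟨by by_contra hn; exact absurd (h2.2 ⟨h, hn⟩) (by omega), h⟩
  · intro _ i j hl
    have hne : i ≠ j := by rintro rfl; exact lt_irrefl _ hl
    have hr := (level_lt_iff hpar heq i j).1 hl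
    exact ⟨edge_of_reach hpar heq hne hr.1, fun he => hr.2 (reach_single he)⟩
  · intro i j hij hs
    exact ⟨edge_of_reach hpar heq hij hs.1, edge_of_reach hpar heq hij.symm hs.2⟩

end
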